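/- arXiv:2403.02986 — 2 statements merged into one kernel-verified Lean document; each statement's English description precedes it below -/
import Mathlib

section
/- Let α ∈ S_n be a regular quasi-diagram. Then for every i ∈ {1,…,n+1}, the i-expansion ι_i(α) ∈ S_{n+1} is a regular quasi-diagram. -/
/-- The cycle `ϑ_{i,n+1} = (i, i+1, …, n+1)` of `S_{n+1}`; 0-indexed on `Fin (n+1)` it is the
cycle `(a, a+1, …, Fin.last n)` where `a` corresponds to `i`. -/
def vartheta {n : ℕ} (a : Fin (n + 1)) : Equiv.Perm (Fin (n + 1)) :=
  Fin.revPerm * (Fin.cycleRange a.rev)⁻¹ * Fin.revPerm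

/-- A permutation of `Fin n` regarded as a permutation of `Fin (n+1)` fixing the last point. -/
def castPerm {n : ℕ} (α : Equiv.Perm (Fin n)) : Equiv.Perm (Fin (n + 1)) :=
  α.viaFintypeEmbedding Fin.castSuccEmb

/-- The `i`-expansion `ι_i(α) = ϑ_{i,n+1} α ϑ_{i,n+1}⁻¹` of a quasi-diagram `α ∈ S_n`. -/
def expand {n : ℕ} (a : Fin (n + 1)) (α : Equiv.Perm (Fin n)) : Equiv.Perm (Fin (n + 1)) :=
  vartheta a * castPerm α * (vartheta a)⁻¹

/-- `β` is regular with respect to the distinguished point `p` (the point "1"): every orbit of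
`ζβ` contains `p` or an isolated point of `β`. -/
def RegularAt {m : ℕ} (β : Equiv.Perm (Fin m)) (p : Fin m) : Prop :=
  ∀ x : Fin m, ∃ y : Fin m, (finRotate m * β).SameCycle x y ∧ (y = p ∨ β y = y)

/-!
Up to relabelling, `expand a α` is `α` together with a new isolated point `a`. The long cycles
satisfy `ζ_{n+1} = (a ζ_{n+1}(a)) ∘ expand a ζ_n`, because inserting `a` into `ζ_n` is
multiplication by a transposition; as `expand a` is multiplicative, this gives
`ζ_{n+1} ∘ expand a α = (a ζ_{n+1}(a)) ∘ expand a (ζ_n ∘ α)`. Since `expand a (ζ_n ∘ α)` fixes `a`,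
the transposition only inserts `a` into one of its cycles, so the relabelled points of an orbit
of `ζ_n ∘ α` still share an orbit, which contains an isolated point or the relabelled base
point. The latter is again the first point unless `a` is; in that case it is the image of `a`.
-/

open Equiv Equiv.Perm

section SameCycle

variable {X : Type*} {f g : Perm X}

theorem sameCycle_of_forall_sameCycle_apply (h : ∀ x, g.SameCycle x (f x)) {x y : X}
    (hxy : f.SameCycle x y) : g.SameCycle x y := by
  obtain ⟨k, rfl⟩ := hxy
  induction k with
  | zero => exact .rfl
  | succ k ih =>
    rw [add_comm, zpow_one_add, Perm.mul_apply]
    exact ih.trans (h _)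
  | pred k ih =>
    have back := h ((f ^ (-(k : ℤ) - 1)) x)
    rw [← Perm.mul_apply, ← zpow_one_add, add_sub_cancel] at back
    exact ih.trans back.symm

theorem sameCycle_swap_mul_of_apply_eq_self [DecidableEq X] {a : X} (b : X) (ha : g a = a)
    {x y : X} (hxy : g.SameCycle x y) : (swap a b * g).SameCycle x y := by
  refine sameCycle_of_forall_sameCycle_apply (fun z => ?_) hxy
  rcases eq_or_ne z a with rfl | hza
  · exact ha.symm.sameCycle _
  rcases eq_or_ne (g z) b with hzb | hzb
  -- Here `a` is inserted between `z` and `b = g z`: the product maps `z ↦ a ↦ b`.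
  · have hz_eq : (swap a b * g) z = a := by rw [Perm.mul_apply, hzb, swap_apply_right]
    have ha_eq : (swap a b * g) a = g z := by rw [Perm.mul_apply, ha, swap_apply_left, hzb]
    rw [← ha_eq, sameCycle_apply_right]
    exact ⟨1, hz_eq⟩
  · have hgza : g z ≠ a := fun h => hza (g.injective (h.trans ha.symm))
    exact ⟨1, swap_apply_of_ne_of_ne hgza hzb⟩

end SameCycle

section Expansion

variable {n : ℕ} (a : Fin (n + 1)) (α β : Perm (Fin n))

theorem vartheta_last : vartheta a (Fin.last n) = a := by
  simp [vartheta, Perm.inv_def]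

theorem vartheta_castSucc (j : Fin n) : vartheta a j.castSucc = a.succAbove j := by
  simp [vartheta, Perm.inv_def, Fin.rev_castSucc, Fin.rev_succAbove]

theorem castPerm_last : castPerm α (Fin.last n) = Fin.last n :=
  viaFintypeEmbedding_apply_notMem_range α Fin.castSuccEmb
    fun ⟨j, hj⟩ => (Fin.castSucc_lt_last j).ne hj

theorem castPerm_castSucc (j : Fin n) : castPerm α j.castSucc = (α j).castSucc :=
  viaFintypeEmbedding_apply_image α Fin.castSuccEmb j

theorem expand_apply_self : expand a α a = a := by
  have h : (vartheta a)⁻¹ a = Fin.last n := by rw [Perm.inv_eq_iff_eq, vartheta_last]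
  simp only [expand, Perm.mul_apply, h, castPerm_last, vartheta_last]

theorem expand_apply_succAbove (j : Fin n) :
    expand a α (a.succAbove j) = a.succAbove (α j) := by
  have h : (vartheta a)⁻¹ (a.succAbove j) = j.castSucc := by
    rw [Perm.inv_eq_iff_eq, vartheta_castSucc]
  simp only [expand, Perm.mul_apply, h, castPerm_castSucc, vartheta_castSucc]

theorem expand_eq_extendDomain : expand a α = α.extendDomain (finSuccAboveEquiv a) := by
  refine Equiv.ext (Fin.succAboveCases a ?_ fun j => ?_)
  · rw [expand_apply_self, extendDomain_apply_not_subtype _ _ (p := (· ≠ a)) (not_not.2 rfl)]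
  · exact (expand_apply_succAbove a α j).trans
      (extendDomain_apply_image α (finSuccAboveEquiv a) j).symm

theorem expand_mul : expand a (α * β) = expand a α * expand a β := by
  simp only [expand_eq_extendDomain, extendDomain_mul]

theorem sameCycle_expand {x y : Fin n} :
    (expand a α).SameCycle (a.succAbove x) (a.succAbove y) ↔ α.SameCycle x y := by
  rw [expand_eq_extendDomain]
  exact sameCycle_extendDomain (f := finSuccAboveEquiv a)

theorem finRotate_succAbove (j : Fin n) :
    finRotate (n + 1) (a.succAbove j) =
      swap a (finRotate (n + 1) a) (a.succAbove (finRotate n j)) := by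
  obtain _ | n := n
  · exact j.elim0
  -- The swap acts nontrivially exactly when `a` is the successor of `a.succAbove j`.
  grind [coe_finRotate, Fin.succAbove]

theorem finRotate_succ_eq_swap_mul_expand :
    finRotate (n + 1) = swap a (finRotate (n + 1) a) * expand a (finRotate n) := by
  refine Equiv.ext (Fin.succAboveCases a ?_ fun j => ?_)
  · rw [Perm.mul_apply, expand_apply_self, swap_apply_left]
  · rw [Perm.mul_apply, expand_apply_succAbove, finRotate_succAbove]

theorem sameCycle_finRotate_mul_expand {x y : Fin n} (h : (finRotate n * α).SameCycle x y) :
    (finRotate (n + 1) * expand a α).SameCycle (a.succAbove x) (a.succAbove y) := by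
  rw [finRotate_succ_eq_swap_mul_expand a, mul_assoc, ← expand_mul]
  exact sameCycle_swap_mul_of_apply_eq_self _ (expand_apply_self a _)
    ((sameCycle_expand a _).2 h)

theorem sameCycle_finRotate_mul_expand_succAbove_zero [NeZero n] :
    (finRotate (n + 1) * expand a α).SameCycle (a.succAbove 0) 0 := by
  cases a using Fin.cases with
  | zero =>
    have h : (finRotate (n + 1) * expand 0 α) 0 = Fin.succAbove 0 0 := by
      rw [Perm.mul_apply, expand_apply_self, finRotate_apply, zero_add,
        Fin.succAbove_zero_apply, Fin.succ_zero_eq_one']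
    rw [← h, sameCycle_apply_left]
  | succ i => rw [Fin.succ_succAbove_zero]

end Expansion

namespace RegularAt

variable {n : ℕ} {α : Perm (Fin n)} {p q : Fin n}

theorem of_sameCycle (h : RegularAt α p) (hpq : (finRotate n * α).SameCycle p q) :
    RegularAt α q := by
  intro x
  obtain ⟨y, hxy, rfl | hy⟩ := h x
  · exact ⟨q, hxy.trans hpq, .inl rfl⟩
  · exact ⟨y, hxy, .inr hy⟩

theorem expand_succAbove (h : RegularAt α p) (a : Fin (n + 1)) :
    RegularAt (expand a α) (a.succAbove p) := by
  refine Fin.succAboveCases a ⟨a, .rfl, .inr (expand_apply_self a α)⟩ fun j => ?_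
  obtain ⟨y, hjy, hy⟩ := h j
  refine ⟨a.succAbove y, sameCycle_finRotate_mul_expand a α hjy, ?_⟩
  rwa [expand_apply_succAbove, Fin.succAbove_right_inj, Fin.succAbove_right_inj]

end RegularAt

theorem stmt_10_general {n : ℕ} [NeZero n] {α : Perm (Fin n)} (hreg : RegularAt α 0)
    (a : Fin (n + 1)) : RegularAt (expand a α) 0 :=
  (hreg.expand_succAbove a).of_sameCycle (sameCycle_finRotate_mul_expand_succAbove_zero a α)

/-- Let `α ∈ S_n` be a regular quasi-diagram (an involution of `Fin n`,
0-indexed: point `1` is `⟨0, _⟩`).  Then for every `i ∈ {1,…,n+1}` (i.e. `a : Fin (n+1)`),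
the `i`-expansion `ι_i(α) ∈ S_{n+1}` is a regular quasi-diagram. -/
theorem stmt_10 (n : ℕ) (hn : 0 < n) (α : Equiv.Perm (Fin n))
    (hα : ∀ x, α (α x) = x)
    (hreg : RegularAt α ⟨0, hn⟩) :
    ∀ a : Fin (n + 1), RegularAt (expand a α) (0 : Fin (n + 1)) :=
  fun a => have : NeZero n := ⟨hn.ne'⟩; stmt_10_general hreg a
end

section
/- Let α ∈ S_{2m} be a chord diagram (m ≥ 1). Then the following are equivalent: (1) α is maximal; (2) α is regular; (3) α is rotatably regular; (4) the l-th rotation ζ^l α ζ^{−l} is maximal for every l ∈ ℤ. -/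
/-!
When `α` has no isolated points, regularity says that every orbit of `ζα` contains the
distinguished point, that is, that there is only one orbit. Since `ζ` commutes with `ζ ^ l`,
passing to the `l`-th rotation conjugates `ζα` by `ζ ^ l`, which preserves the number of orbits.
-/

theorem mul_conj_of_commute {G : Type*} [Group G] {a g : G} (h : Commute a g) (b : G) :
    a * (g * b * g⁻¹) = g * (a * b) * g⁻¹ := by
  simp only [← mul_assoc, h.eq]

section Conj

variable {X : Type*} {f g : Equiv.Perm X}

theorem conj_apply_eq_self_iff {x : X} : (g * f * g⁻¹) x = x ↔ f (g⁻¹ x) = g⁻¹ x := by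
  rw [Equiv.Perm.mul_apply, Equiv.Perm.mul_apply, Equiv.Perm.eq_inv_iff_eq]

theorem forall_sameCycle_conj_iff :
    (∀ x y, (g * f * g⁻¹).SameCycle x y) ↔ ∀ x y, f.SameCycle x y := by
  simp only [Equiv.Perm.sameCycle_conj]
  exact g⁻¹.surjective.forall₂.symm

end Conj

namespace QuasiDiagram

variable {n : ℕ} {β : Equiv.Perm (Fin n)}

/-- Maximality of a diagram `β`: the permutation `ζβ` has at most one orbit, hence exactly one
when `n ≠ 0`. The diagram may be any permutation, not only an involution. -/
def IsMaximal (β : Equiv.Perm (Fin n)) : Prop :=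
  ∀ x y : Fin n, (finRotate n * β).SameCycle x y

/-- The `l`-th rotation `ζ ^ l β ζ ^ (-l)` of a diagram `β`, where `β` may be any permutation. -/
def rotation (β : Equiv.Perm (Fin n)) (l : ℤ) : Equiv.Perm (Fin n) :=
  finRotate n ^ l * β * finRotate n ^ (-l)

theorem rotation_eq_conj (β : Equiv.Perm (Fin n)) (l : ℤ) :
    rotation β l = finRotate n ^ l * β * (finRotate n ^ l)⁻¹ := by
  rw [rotation, zpow_neg]

theorem rotation_apply_ne_self (hβ : ∀ i, β i ≠ i) (l : ℤ) (i : Fin n) :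
    rotation β l i ≠ i := by
  rw [rotation_eq_conj, Ne, conj_apply_eq_self_iff]
  exact hβ _

theorem isMaximal_rotation_iff {l : ℤ} : IsMaximal (rotation β l) ↔ IsMaximal β := by
  have h_comm : Commute (finRotate n) (finRotate n ^ l) := Commute.self_zpow _ l
  rw [IsMaximal, rotation_eq_conj, mul_conj_of_commute h_comm, forall_sameCycle_conj_iff,
    IsMaximal]

theorem regularAt_iff_isMaximal (hβ : ∀ i, β i ≠ i) {p : Fin n} :
    RegularAt β p ↔ IsMaximal β := by
  refine ⟨fun h_reg => ?_, fun h_max x => ⟨p, h_max x p, Or.inl rfl⟩⟩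
  have sameCycle_p (x : Fin n) : (finRotate n * β).SameCycle x p := by
    obtain ⟨y, hxy, rfl | hy⟩ := h_reg x
    · exact hxy
    · exact absurd hy (hβ y)
  exact fun x y => (sameCycle_p x).trans (sameCycle_p y).symm

end QuasiDiagram

open QuasiDiagram in
theorem stmt_16_general {n : ℕ} (α : Equiv.Perm (Fin n)) (hα : ∀ i, α i ≠ i) (p : Fin n) :
    [IsMaximal α, RegularAt α p, ∀ l : ℤ, RegularAt (rotation α l) p,
      ∀ l : ℤ, IsMaximal (rotation α l)].TFAE := by
  tfae_have 1 ↔ 2 := (regularAt_iff_isMaximal hα).symm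
  tfae_have 3 ↔ 4 :=
    forall_congr' fun l => regularAt_iff_isMaximal (rotation_apply_ne_self hα l)
  tfae_have 1 ↔ 4 := by simp only [isMaximal_rotation_iff, forall_const]
  tfae_finish

/-- Let `α ∈ S_{2m}` (`m ≥ 1`) be a chord diagram (a fixed-point-free
involution of `Fin (2m)`, 0-indexed: point `1` is `⟨0, _⟩`; `ζ = finRotate (2m)`).  Then the
following are equivalent: (1) `α` is maximal (one orbit of `ζα`); (2) `α` is regular;
(3) `α` is rotatably regular; (4) every rotation `ζ^l α ζ^(-l)` (`l ∈ ℤ`) is maximal. -/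
theorem stmt_16 (m : ℕ) (hm : 0 < m) (α : Equiv.Perm (Fin (2 * m)))
    (hα : ∀ i, α (α i) = i) (hfree : ∀ i, α i ≠ i) :
    ((∀ x y : Fin (2 * m), (finRotate (2 * m) * α).SameCycle x y) ↔
      RegularAt α ⟨0, by omega⟩) ∧
    (RegularAt α ⟨0, by omega⟩ ↔
      (∀ l : ℤ, RegularAt (finRotate (2 * m) ^ l * α * finRotate (2 * m) ^ (-l))
        ⟨0, by omega⟩)) ∧
    ((∀ l : ℤ, RegularAt (finRotate (2 * m) ^ l * α * finRotate (2 * m) ^ (-l))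
        ⟨0, by omega⟩) ↔
      (∀ l : ℤ, ∀ x y : Fin (2 * m),
        (finRotate (2 * m) *
          (finRotate (2 * m) ^ l * α * finRotate (2 * m) ^ (-l))).SameCycle x y)) :=
  have h := stmt_16_general α hfree ⟨0, by omega⟩
  ⟨h.out 0 1, h.out 1 2, h.out 2 3⟩
end
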